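/- The Fisher information between two multivariate centered Gaussians whose covariance matrices Σ₁, Σ₂ commute, with Σ₂ invertible, satisfies I(N(0,Σ₁)|N(0,Σ₂)) = Tr(Σ₂⁻² (Σ₂−Σ₁)² Σ₁⁻¹). -/

import Mathlib

open Real Matrix MeasureTheory

/-- Partial derivative in direction `i`. -/
noncomputable def pd {n : ℕ} (i : Fin n) (g : (Fin n → ℝ) → ℝ) (x : Fin n → ℝ) : ℝ :=
  fderiv ℝ g x (Pi.single i 1)

/-- Density of the centered Gaussian measure on `ℝ^d` with covariance matrix `S`. -/
noncomputable def gaussDensity {d : ℕ} (S : Matrix (Fin d) (Fin d) ℝ) (x : Fin d → ℝ) : ℝ :=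
  (Real.sqrt ((2 * π) ^ d * S.det))⁻¹ * Real.exp (-(x ⬝ᵥ S⁻¹.mulVec x) / 2)

/-- Fisher information `I(p|q) = ∫ p ‖∇ log (p/q)‖²`. -/
noncomputable def fisherInfo {d : ℕ} (p q : (Fin d → ℝ) → ℝ) : ℝ :=
  ∫ x, p x * ∑ i : Fin d, (pd i (fun y => Real.log (p y / q y)) x) ^ 2

lemma gm_int (n : ℕ) : Integrable (fun y : ℝ => y ^ n * ProbabilityTheory.gaussianPDFReal 0 1 y) := by
  have h := integrable_rpow_mul_exp_neg_mul_sq (b := 1/2) (by norm_num) (s := n) (by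
    have : (0:ℝ) ≤ n := n.cast_nonneg
    linarith)
  have h2 := h.const_mul (√(2 * π * (1:NNReal)))⁻¹
  refine h2.congr (Filter.Eventually.of_forall fun y => ?_)
  simp only [ProbabilityTheory.gaussianPDFReal, rpow_natCast]
  rw [show -(y - 0) ^ 2 / (2 * ((1:NNReal):ℝ)) = -(1/2) * y^2 by push_cast; ring]
  ring
lemma gm0 : ∫ y : ℝ, y ^ 0 * ProbabilityTheory.gaussianPDFReal 0 1 y = 1 := by
  simpa using ProbabilityTheory.integral_gaussianPDFReal_eq_one 0 (v := 1) one_ne_zero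
lemma gm1 : ∫ y : ℝ, y ^ 1 * ProbabilityTheory.gaussianPDFReal 0 1 y = 0 := by
  have := ProbabilityTheory.integral_id_gaussianReal (μ := 0) (v := 1)
  rw [ProbabilityTheory.integral_gaussianReal_eq_integral_smul one_ne_zero] at this
  refine Eq.trans ?_ this; congr 1; ext y; simp [mul_comm]
lemma gm2 : ∫ y : ℝ, y ^ 2 * ProbabilityTheory.gaussianPDFReal 0 1 y = 1 := by
  have := ProbabilityTheory.variance_fun_id_gaussianReal (μ := 0) (v := 1)
  rw [ProbabilityTheory.variance_eq_integral measurable_id'.aemeasurable] at this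
  simp only [ProbabilityTheory.integral_id_gaussianReal] at this
  rw [ProbabilityTheory.integral_gaussianReal_eq_integral_smul one_ne_zero] at this
  rw [← NNReal.coe_one, ← this]; congr 1; ext y; simp [mul_comm]

lemma prod_form {d : ℕ} (i j : Fin d) (y : Fin d → ℝ) :
    y i * y j * ∏ k, ProbabilityTheory.gaussianPDFReal 0 1 (y k) =
    ∏ k, (y k ^ ((if k = i then 1 else 0) + (if k = j then 1 else 0)) * ProbabilityTheory.gaussianPDFReal 0 1 (y k)) := by
  simp only [Finset.prod_mul_distrib, pow_add]
  simp [pow_ite]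

lemma std_int {d : ℕ} (i j : Fin d) :
    Integrable (fun y : Fin d → ℝ => y i * y j * ∏ k, ProbabilityTheory.gaussianPDFReal 0 1 (y k)) := by
  simp only [prod_form]
  exact Integrable.fintype_prod
    (f := fun k t => t ^ ((if k = i then 1 else 0) + (if k = j then 1 else 0)) * ProbabilityTheory.gaussianPDFReal 0 1 t)
    (fun k => gm_int _)

lemma std_val {d : ℕ} (i j : Fin d) :
    ∫ y : Fin d → ℝ, y i * y j * ∏ k, ProbabilityTheory.gaussianPDFReal 0 1 (y k) = if i = j then 1 else 0 := by
  simp only [prod_form]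
  rw [integral_fintype_prod_volume_eq_prod
    (f := fun k t => t ^ ((if k = i then 1 else 0) + (if k = j then 1 else 0)) * ProbabilityTheory.gaussianPDFReal 0 1 t)]
  split_ifs with h
  · subst h
    apply Finset.prod_eq_one
    intro k _
    by_cases hk : k = i
    · simp only [hk, if_true]; exact gm2
    · simp only [hk, if_false]; exact gm0
  · apply Finset.prod_eq_zero (Finset.mem_univ i)
    simp only [h, if_true, if_false]; exact gm1

lemma std_quad {d : ℕ} (B : Matrix (Fin d) (Fin d) ℝ) :
    ∫ y : Fin d → ℝ, (∏ k, ProbabilityTheory.gaussianPDFReal 0 1 (y k)) * (y ⬝ᵥ B *ᵥ y) = B.trace := by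
  have : ∀ y : Fin d → ℝ, (∏ k, ProbabilityTheory.gaussianPDFReal 0 1 (y k)) * (y ⬝ᵥ B *ᵥ y) =
      ∑ i, ∑ j, B i j * (y i * y j * ∏ k, ProbabilityTheory.gaussianPDFReal 0 1 (y k)) := by
    intro y
    simp only [dotProduct, mulVec, Finset.mul_sum]
    exact Finset.sum_congr rfl fun i _ => Finset.sum_congr rfl fun j _ => by ring
  simp only [this]
  rw [integral_finsetSum]
  swap
  · exact fun i _ => integrable_finsetSum _ fun j _ => (std_int i j).const_mul _
  simp only [trace, diag]
  refine Finset.sum_congr rfl fun i _ => ?_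
  rw [integral_finsetSum]
  swap
  · exact fun j _ => (std_int i j).const_mul _
  simp [integral_const_mul, std_val]

lemma cov_change {d : ℕ} (C : Matrix (Fin d) (Fin d) ℝ) (hC : C.det ≠ 0) (f : (Fin d → ℝ) → ℝ) :
    ∫ x, f x = ∫ y, |C.det| * f (C *ᵥ y) := by
  have h := Real.map_matrix_volume_pi_eq_smul_volume_pi hC
  have e : MeasurableEmbedding (toLin' C) := by
    let L : (Fin d → ℝ) ≃ₗ[ℝ] (Fin d → ℝ) := LinearEquiv.ofIsUnitDet (f := toLin' C) (v := Pi.basisFun ℝ _) (v' := Pi.basisFun ℝ _) (by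
      simpa using hC)
    exact L.toContinuousLinearEquiv.toHomeomorph.measurableEmbedding
  have h2 := e.integral_map (μ := volume) f
  rw [h, integral_smul_measure, ENNReal.toReal_ofReal (abs_nonneg _)] at h2
  simp only [toLin'_apply, smul_eq_mul] at h2
  rw [integral_const_mul, ← h2, ← mul_assoc, ← abs_mul, mul_inv_cancel₀ hC]; simp

lemma pdf_prod {d : ℕ} (y : Fin d → ℝ) : ∏ k, ProbabilityTheory.gaussianPDFReal 0 1 (y k) =
    (√((2 * π) ^ d))⁻¹ * Real.exp (-(y ⬝ᵥ y) / 2) := by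
  simp only [ProbabilityTheory.gaussianPDFReal, Finset.prod_mul_distrib, ← Real.exp_sum]
  congr 1
  · simp [Real.sqrt_eq_rpow, ← Real.rpow_natCast, ← Real.rpow_mul, pi_pos.le, mul_comm]
  · congr 1
    simp only [dotProduct, neg_div, Finset.sum_div, Finset.sum_neg_distrib]
    simp [pow_two]

lemma exists_factor {d : ℕ} (S : Matrix (Fin d) (Fin d) ℝ) (h : S.PosDef) :
    ∃ C : Matrix (Fin d) (Fin d) ℝ, S = C * Cᵀ := by
  open scoped MatrixOrder Matrix.Norms.L2Operator in
  obtain ⟨b, hb⟩ := CStarAlgebra.nonneg_iff_eq_star_mul_self.mp h.posSemidef.nonneg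
  exact ⟨bᵀ, by rw [hb, star_eq_conjTranspose, conjTranspose_eq_transpose_of_trivial, transpose_transpose]⟩

lemma gauss_quad {d : ℕ} (S B : Matrix (Fin d) (Fin d) ℝ) (h : S.PosDef) :
    ∫ x, gaussDensity S x * (x ⬝ᵥ B *ᵥ x) = (B * S).trace := by
  obtain ⟨C, hC⟩ := exists_factor S h
  have hdet : S.det = C.det ^ 2 := by rw [hC, det_mul, det_transpose, sq]
  have hC0 : C.det ≠ 0 := by
    intro h0
    have := h.det_pos
    rw [hdet, h0] at this
    simp at this
  have hCu : IsUnit C.det := isUnit_iff_ne_zero.mpr hC0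
  have hCt : IsUnit Cᵀ.det := by rwa [det_transpose]
  rw [cov_change C hC0]
  have key : Cᵀ * S⁻¹ * C = 1 := by
    rw [hC, Matrix.mul_inv_rev, ← mul_assoc, mul_nonsing_inv _ hCt, one_mul, nonsing_inv_mul _ hCu]
  have quad : ∀ (M : Matrix (Fin d) (Fin d) ℝ) (y : Fin d → ℝ),
      (C *ᵥ y) ⬝ᵥ M *ᵥ (C *ᵥ y) = y ⬝ᵥ (Cᵀ * M * C) *ᵥ y := by
    intro M y
    rw [mulVec_mulVec, dotProduct_comm, dotProduct_mulVec, ← mulVec_transpose, dotProduct_comm,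
      mulVec_mulVec, mul_assoc]
  have e : ∀ y : Fin d → ℝ, |C.det| * (gaussDensity S (C *ᵥ y) * ((C *ᵥ y) ⬝ᵥ B *ᵥ (C *ᵥ y))) =
      (∏ k, ProbabilityTheory.gaussianPDFReal 0 1 (y k)) * (y ⬝ᵥ (Cᵀ * B * C) *ᵥ y) := by
    intro y
    rw [pdf_prod, gaussDensity, quad, quad, key, one_mulVec, hdet, Real.sqrt_mul (by positivity),
      Real.sqrt_sq_eq_abs, mul_inv]
    have : |C.det| ≠ 0 := abs_ne_zero.mpr hC0
    field_simp
  simp only [e]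
  rw [std_quad, trace_mul_comm, ← mul_assoc, ← hC, trace_mul_comm]

lemma pd_log {d : ℕ} (S₁ S₂ : Matrix (Fin d) (Fin d) ℝ)
    (h₁ : S₁.PosDef) (h₂ : S₂.PosDef) (i : Fin d) (x : Fin d → ℝ) :
    pd i (fun y => Real.log (gaussDensity S₁ y / gaussDensity S₂ y)) x
      = -((S₁⁻¹ - S₂⁻¹) *ᵥ x) i := by
  have p₁ := h₁.det_pos
  have p₂ := h₂.det_pos
  have hs : (S₁⁻¹ - S₂⁻¹)ᵀ = S₁⁻¹ - S₂⁻¹ := by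
    have a := h₁.inv.isHermitian.eq
    have b := h₂.inv.isHermitian.eq
    rw [conjTranspose_eq_transpose_of_trivial] at a b
    rw [transpose_sub, a, b]
  set A := S₁⁻¹ - S₂⁻¹ with hA
  have hf : (fun y => Real.log (gaussDensity S₁ y / gaussDensity S₂ y)) = fun y =>
      Real.log ((√((2 * π) ^ d * S₁.det))⁻¹ / (√((2 * π) ^ d * S₂.det))⁻¹)
        + (-1/2) * ∑ k, y k * ∑ l, A k l * y l := by
    funext y
    have q : ∑ k, y k * ∑ l, A k l * y l = y ⬝ᵥ S₁⁻¹ *ᵥ y - y ⬝ᵥ S₂⁻¹ *ᵥ y := by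
      rw [← dotProduct_sub, ← sub_mulVec]; rfl
    rw [q, gaussDensity, gaussDensity, mul_div_mul_comm, ← Real.exp_sub, Real.log_mul, Real.log_exp]
    · ring
    · positivity
    · positivity
  rw [hf, pd]
  have hp : ∀ k, HasFDerivAt (fun y : Fin d → ℝ => y k) (ContinuousLinearMap.proj (R := ℝ) (φ := fun _ => ℝ) k) x :=
    fun k => (ContinuousLinearMap.proj (R := ℝ) (φ := fun _ => ℝ) k).hasFDerivAt
  have hd := ((HasFDerivAt.fun_sum (u := Finset.univ) fun k _ =>
    (hp k).fun_mul (HasFDerivAt.fun_sum (u := Finset.univ) fun l _ => (hp l).const_mul (A k l))).const_mul (-1/2:ℝ)).const_add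
      (Real.log ((√((2 * π) ^ d * S₁.det))⁻¹ / (√((2 * π) ^ d * S₂.det))⁻¹))
  rw [HasFDerivAt.fderiv hd]
  have hs' : ∀ k, A k i = A i k := fun k => congrFun (congrFun hs i) k
  simp [Pi.single_apply, Finset.sum_add_distrib, mulVec, dotProduct, hs']
  have hx : ∑ k, x k * A i k = ∑ k, A i k * x k := Finset.sum_congr rfl fun k _ => mul_comm _ _
  rw [hx]; ring

/-- Fisher information between two centered Gaussians with commuting covariance matrices:
`I(N(0,S₁)|N(0,S₂)) = Tr(S₂⁻² (S₂ − S₁)² S₁⁻¹)`. -/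
theorem fisherInfo_gaussian_comm {d : ℕ} (S₁ S₂ : Matrix (Fin d) (Fin d) ℝ)
    (h₁ : S₁.PosDef) (h₂ : S₂.PosDef) (hcomm : S₁ * S₂ = S₂ * S₁) :
    fisherInfo (gaussDensity S₁) (gaussDensity S₂)
      = ((S₂⁻¹) ^ 2 * (S₂ - S₁) ^ 2 * S₁⁻¹).trace := by
  have hs : (S₁⁻¹ - S₂⁻¹)ᵀ = S₁⁻¹ - S₂⁻¹ := by
    have a := h₁.inv.isHermitian.eq
    have b := h₂.inv.isHermitian.eq
    rw [conjTranspose_eq_transpose_of_trivial] at a b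
    rw [transpose_sub, a, b]
  have u₁ : IsUnit S₁.det := h₁.det_pos.ne'.isUnit
  have u₂ : IsUnit S₂.det := h₂.det_pos.ne'.isUnit
  have e : ∀ x : Fin d → ℝ, ∑ i : Fin d, (pd i (fun y => Real.log (gaussDensity S₁ y / gaussDensity S₂ y)) x) ^ 2
      = x ⬝ᵥ ((S₁⁻¹ - S₂⁻¹) * (S₁⁻¹ - S₂⁻¹)) *ᵥ x := by
    intro x
    simp only [pd_log S₁ S₂ h₁ h₂, neg_sq]
    rw [← mulVec_mulVec, dotProduct_mulVec, ← mulVec_transpose, hs]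
    simp only [dotProduct, sq]
  simp only [fisherInfo, e]
  rw [gauss_quad _ _ h₁]
  have c : S₂⁻¹ * S₁ = S₁ * S₂⁻¹ := by
    calc S₂⁻¹ * S₁ = S₂⁻¹ * (S₁ * S₂) * S₂⁻¹ := by
          rw [mul_assoc, mul_assoc, mul_nonsing_inv _ u₂, mul_one]
      _ = S₁ * S₂⁻¹ := by rw [hcomm, ← mul_assoc, nonsing_inv_mul _ u₂, one_mul]
  have c2 : S₂⁻¹ * (S₂ - S₁) = (S₂ - S₁) * S₂⁻¹ := by
    rw [mul_sub, sub_mul, c, nonsing_inv_mul _ u₂, mul_nonsing_inv _ u₂]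
  have c3 : S₂⁻¹ * (S₂ - S₁) = (S₁⁻¹ - S₂⁻¹) * S₁ := by
    rw [mul_sub, sub_mul, nonsing_inv_mul _ u₂, nonsing_inv_mul _ u₁]
  have c4 : S₂⁻¹ ^ 2 * (S₂ - S₁) ^ 2 = (S₂⁻¹ * (S₂ - S₁)) ^ 2 :=
    (Commute.mul_pow (show Commute _ _ from c2) 2).symm
  rw [c4, c3, sq]
  have : (S₁⁻¹ - S₂⁻¹) * S₁ * ((S₁⁻¹ - S₂⁻¹) * S₁) * S₁⁻¹ = (S₁⁻¹ - S₂⁻¹) * S₁ * (S₁⁻¹ - S₂⁻¹) := by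
    rw [mul_assoc, mul_assoc (S₁⁻¹ - S₂⁻¹) S₁ S₁⁻¹, mul_nonsing_inv _ u₁, mul_one]
  rw [this, mul_assoc, trace_mul_comm]
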